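/- There exists a constant C > 0, depending only on n, such that the following Caccioppoli-type inequality holds: let w : Ω₁ → ℝ be C² on Ω₁, extending continuously to the closure of Ω₁ with w = 0 on Γ₁⁺ ∪ Γ₁⁻, satisfying Δw(x) = −Δũ(x) pointwise in Ω₁, and with |w|², |∇w|², |Δũ|² integrable on Ω₁. Then for every x₀ = (x₀', x₀,n) ∈ Ω_{1/2} and all 0 < t < s with |x₀'| + s < 1/2: ∫_{Ω̂_t(x₀)} |∇w|² dx ≤ (C/(s − t)²) ∫_{Ω̂_s(x₀)} |w|² dx + C·(s − t)² ∫_{Ω̂_s(x₀)} |Δũ|² dx. -/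

import Mathlib

/-!
The inequality is the classical Caccioppoli estimate: test `Δw = -Δũ` with `η² w`, where `η` is a
cutoff in the horizontal variables equal to `1` for `|x' - x₀'| ≤ t` and to `0` for
`|x' - x₀'| ≥ s`, with `|∇η| ≤ D / (s - t)` (`exists_cutoff`), and absorb the cross term
`2 η w ∇η · ∇w` by Young's inequality.

Since `w` is only continuous up to the top and bottom boundaries, the integration by parts is
carried out with the test functions `η² g_N(w)`, where `g_N` is a `C¹` truncation of the identity
vanishing for `τ² ≤ 1/N` (`exists_trunc`). Because `w = 0` on both graphs, these are compactly
supported in `Ω₁` (`exists_compact`), so no boundary term appears (`integral_div_eq_zero`) and no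
regularity of the boundary is used. Letting `N → ∞` by dominated convergence produces the energy
identity with `|∇w|²` replaced by `1_{w ≠ 0} |∇w|²`; the two agree almost everywhere, because the
gradient vanishes at density points of `{w = 0}` (`fderiv_eq_zero_ae`). This gives
`energy_identity`.

The norm of `fderiv` is dual to the sup norm on `Ep n × ℝ`; it is compared with the Euclidean
length of the gradient by `norm_sq_le_sum_dir`, at the cost of a factor `n`.
-/


open MeasureTheory Metric Finset

noncomputable section

/-- `ℝ^{n-1}`, the horizontal (tangential) variables `x'`. -/
abbrev Ep (n : ℕ) := EuclideanSpace ℝ (Fin (n - 1))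

/-- `ℝ^n = ℝ^{n-1} × ℝ`, points written `x = (x', x_n)`. -/
abbrev Efull (n : ℕ) := Ep n × ℝ

/-- The narrow region `Ω_r`. -/
def Omega (n : ℕ) (ε : ℝ) (h1 h2 : Ep n → ℝ) (r : ℝ) : Set (Efull n) :=
  {x | ‖x.1‖ < r ∧ -ε/2 + h2 x.1 < x.2 ∧ x.2 < ε/2 + h1 x.1}

/-- Top boundary `Γ_r⁺`. -/
def Gammap (n : ℕ) (ε : ℝ) (h1 : Ep n → ℝ) (r : ℝ) : Set (Efull n) :=
  {x | ‖x.1‖ ≤ r ∧ x.2 = ε/2 + h1 x.1}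

/-- Bottom boundary `Γ_r⁻`. -/
def Gammam (n : ℕ) (ε : ℝ) (h2 : Ep n → ℝ) (r : ℝ) : Set (Efull n) :=
  {x | ‖x.1‖ ≤ r ∧ x.2 = -ε/2 + h2 x.1}

/-- `Ω̂_s(x₀) = {x ∈ Ω_{1/2} : |x' - x₀'| < s}`. -/
def OmegaHat (n : ℕ) (ε : ℝ) (h1 h2 : Ep n → ℝ) (x0 : Efull n) (s : ℝ) : Set (Efull n) :=
  {x | x ∈ Omega n ε h1 h2 (1/2) ∧ ‖x.1 - x0.1‖ < s}

/-- The `n` coordinate directions of `ℝ^{n-1} × ℝ`: the first `n-1` are the horizontal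
Euclidean basis vectors, the last is the vertical direction. -/
def dir (n : ℕ) (α : Fin n) : Efull n :=
  if h : (α : ℕ) < n - 1 then (EuclideanSpace.single (⟨(α : ℕ), h⟩ : Fin (n - 1)) 1, (0:ℝ))
  else (0, 1)

/-- Tangential direction `e_α` for `α ∈ {1, …, n-1}`. -/
def tang (n : ℕ) (α : Fin (n - 1)) : Efull n := (EuclideanSpace.single α 1, (0:ℝ))

/-- Vertical direction `e_n`. -/
def vert (n : ℕ) : Efull n := (0, 1)

/-- Pointwise Laplacian `Δu = Σ_α ∂_α∂_α u`. -/
def lapl (n : ℕ) (u : Efull n → ℝ) (x : Efull n) : ℝ :=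
  ∑ α : Fin n, fderiv ℝ (fun y => fderiv ℝ u y (dir n α)) x (dir n α)

/-- The auxiliary function `ū(x', x_n) = (x_n - h2(x') + ε/2)/(ε + h1(x') - h2(x'))`. -/
def ubar (n : ℕ) (ε : ℝ) (h1 h2 : Ep n → ℝ) (x : Efull n) : ℝ :=
  (x.2 - h2 x.1 + ε/2) / (ε + h1 x.1 - h2 x.1)

/-- The auxiliary function `ũ = φ(x')·ū + ψ(x')·(1 - ū)`. -/
def util (n : ℕ) (ε : ℝ) (h1 h2 φ ψ : Ep n → ℝ) (x : Efull n) : ℝ :=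
  φ x.1 * ubar n ε h1 h2 x + ψ x.1 * (1 - ubar n ε h1 h2 x)

/-- `C²`-norm on the closed unit ball: `sup_{|x'| ≤ 1} (|f| + |∇f| + |∇²f|)`. -/
def C2norm {F : Type*} [NormedAddCommGroup F] [NormedSpace ℝ F] (n : ℕ)
    (f : Ep n → F) : ℝ :=
  ⨆ y : closedBall (0 : Ep n) 1,
    (‖f (y : Ep n)‖ + ‖fderiv ℝ f (y : Ep n)‖ + ‖fderiv ℝ (fderiv ℝ f) (y : Ep n)‖)

/-- `C²(S)`-norm of a function on `ℝ^n`. -/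
def C2normOn (n : ℕ) (S : Set (Efull n)) (f : Efull n → ℝ) : ℝ :=
  ⨆ y : S,
    (‖f (y : Efull n)‖ + ‖fderiv ℝ f (y : Efull n)‖ + ‖fderiv ℝ (fderiv ℝ f) (y : Efull n)‖)

/-- `‖∇f‖_∞ = sup_{|x'| ≤ 1} |∇f(x')|`. -/
def gradSup {F : Type*} [NormedAddCommGroup F] [NormedSpace ℝ F] (n : ℕ) (f : Ep n → F) : ℝ :=
  ⨆ y : closedBall (0 : Ep n) 1, ‖fderiv ℝ f (y : Ep n)‖

/-- `‖∇²f‖_∞ = sup_{|x'| ≤ 1} |∇²f(x')|`. -/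
def hessSup {F : Type*} [NormedAddCommGroup F] [NormedSpace ℝ F] (n : ℕ) (f : Ep n → F) : ℝ :=
  ⨆ y : closedBall (0 : Ep n) 1, ‖fderiv ℝ (fderiv ℝ f) (y : Ep n)‖

/-- The geometric hypotheses on `h1, h2`: `C²` on the closed unit ball, the two graphs
do not touch, flatness at the origin, strict convexity of the gap, and `C²`-bound `κ1`. -/
def HGeom (n : ℕ) (ε κ0 κ1 : ℝ) (h1 h2 : Ep n → ℝ) : Prop :=
  ContDiffOn ℝ 2 h1 (closedBall 0 1) ∧ ContDiffOn ℝ 2 h2 (closedBall 0 1) ∧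
  (∀ y : Ep n, ‖y‖ ≤ 1 → -ε/2 + h2 y < ε/2 + h1 y) ∧
  h1 0 = 0 ∧ h2 0 = 0 ∧ fderiv ℝ h1 0 = 0 ∧ fderiv ℝ h2 0 = 0 ∧
  (∀ v : Ep n, κ0 * ‖v‖^2 ≤ fderiv ℝ (fderiv ℝ (fun y => h1 y - h2 y)) 0 v v) ∧
  C2norm n h1 + C2norm n h2 ≤ κ1

/-- Comparability `(ε + |x'|²)/C₀ ≤ δ(x') ≤ C₀ (ε + |x'|²)`. -/
def DeltaComp (n : ℕ) (ε C₀ : ℝ) (h1 h2 : Ep n → ℝ) : Prop :=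
  ∀ y : Ep n, ‖y‖ ≤ 1 →
    (ε + ‖y‖^2) / C₀ ≤ ε + h1 y - h2 y ∧ ε + h1 y - h2 y ≤ C₀ * (ε + ‖y‖^2)

/-- Hypotheses on the coefficients: `C²`-regularity with total `C²(Ω₁)`-norm at most `κ2`,
boundedness `|A| ≤ Λ`, and the weak ellipticity (Legendre) condition with constant `λ`. -/
def CoeffHyp (n N : ℕ) (ε lam Lam κ2 : ℝ) (h1 h2 : Ep n → ℝ)
    (A : Fin n → Fin n → Fin N → Fin N → Efull n → ℝ)
    (B : Fin n → Fin N → Fin N → Efull n → ℝ)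
    (Cc : Fin n → Fin N → Fin N → Efull n → ℝ)
    (Dc : Fin N → Fin N → Efull n → ℝ) : Prop :=
  (∀ α β i j, ContDiffOn ℝ 2 (A α β i j) (Omega n ε h1 h2 1)) ∧
  (∀ α i j, ContDiffOn ℝ 2 (B α i j) (Omega n ε h1 h2 1)) ∧
  (∀ β i j, ContDiffOn ℝ 2 (Cc β i j) (Omega n ε h1 h2 1)) ∧
  (∀ i j, ContDiffOn ℝ 2 (Dc i j) (Omega n ε h1 h2 1)) ∧
  ((∑ α : Fin n, ∑ β : Fin n, ∑ i : Fin N, ∑ j : Fin N,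
      C2normOn n (Omega n ε h1 h2 1) (A α β i j)) +
   (∑ α : Fin n, ∑ i : Fin N, ∑ j : Fin N, C2normOn n (Omega n ε h1 h2 1) (B α i j)) +
   (∑ β : Fin n, ∑ i : Fin N, ∑ j : Fin N, C2normOn n (Omega n ε h1 h2 1) (Cc β i j)) +
   (∑ i : Fin N, ∑ j : Fin N, C2normOn n (Omega n ε h1 h2 1) (Dc i j)) ≤ κ2) ∧
  (∀ α β i j, ∀ x ∈ Omega n ε h1 h2 1, |A α β i j x| ≤ Lam) ∧
  (∀ ξ : Efull n → EuclideanSpace ℝ (Fin N), ContDiff ℝ (⊤ : ℕ∞) ξ →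
    HasCompactSupport ξ → tsupport ξ ⊆ Omega n ε h1 h2 1 →
    lam * ∫ x in Omega n ε h1 h2 1, ‖fderiv ℝ ξ x‖^2 ≤
      ∫ x in Omega n ε h1 h2 1,
        ∑ α : Fin n, ∑ β : Fin n, ∑ i : Fin N, ∑ j : Fin N,
          A α β i j x * fderiv ℝ ξ x (dir n α) i * fderiv ℝ ξ x (dir n β) j)

/-- `u` is a weak solution of
`∂_α(A^{αβ}_{ij} ∂_β u^j + B^α_{ij} u^j) + C^β_{ij} ∂_β u^j + D_{ij} u^j = 0` in `Ω₁`. -/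
def WeakSol (n N : ℕ) (ε : ℝ) (h1 h2 : Ep n → ℝ)
    (A : Fin n → Fin n → Fin N → Fin N → Efull n → ℝ)
    (B : Fin n → Fin N → Fin N → Efull n → ℝ)
    (Cc : Fin n → Fin N → Fin N → Efull n → ℝ)
    (Dc : Fin N → Fin N → Efull n → ℝ)
    (u : Efull n → EuclideanSpace ℝ (Fin N)) : Prop :=
  ContDiffOn ℝ 1 u (Omega n ε h1 h2 1) ∧
  IntegrableOn (fun x => ‖u x‖^2 + ‖fderiv ℝ u x‖^2) (Omega n ε h1 h2 1) ∧
  ∀ ζ : Efull n → EuclideanSpace ℝ (Fin N), ContDiff ℝ (⊤ : ℕ∞) ζ →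
    HasCompactSupport ζ → tsupport ζ ⊆ Omega n ε h1 h2 1 →
    (∫ x in Omega n ε h1 h2 1,
      ((∑ α : Fin n, ∑ i : Fin N,
          ((∑ β : Fin n, ∑ j : Fin N, A α β i j x * fderiv ℝ u x (dir n β) j) +
            ∑ j : Fin N, B α i j x * u x j) * fderiv ℝ ζ x (dir n α) i) -
        ∑ i : Fin N,
          ((∑ β : Fin n, ∑ j : Fin N, Cc β i j x * fderiv ℝ u x (dir n β) j) +
            ∑ j : Fin N, Dc i j x * u x j) * ζ x i)) = 0

/-- `u` attains the boundary values `(φ, ψ)` on `Γ₁⁺` and `Γ₁⁻`. -/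
def AttainsBV {F : Type*} [NormedAddCommGroup F] [NormedSpace ℝ F] (n : ℕ) (ε : ℝ)
    (h1 h2 : Ep n → ℝ) (u : Efull n → F) (φ ψ : Ep n → F) : Prop :=
  ContinuousOn u (Omega n ε h1 h2 1 ∪ Gammap n ε h1 1 ∪ Gammam n ε h2 1) ∧
  (∀ y : Ep n, ‖y‖ ≤ 1 → u (y, ε/2 + h1 y) = φ y ∧ u (y, -ε/2 + h2 y) = ψ y)

/-- `u` is a harmonic function on `Ω₁` with boundary values `φ` on `Γ₁⁺` and `ψ` on `Γ₁⁻`. -/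
def HarmBV (n : ℕ) (ε : ℝ) (h1 h2 : Ep n → ℝ) (u : Efull n → ℝ) (φ ψ : Ep n → ℝ) : Prop :=
  ContDiffOn ℝ 2 u (Omega n ε h1 h2 1) ∧
  (∀ x ∈ Omega n ε h1 h2 1, lapl n u x = 0) ∧
  IntegrableOn (fun x => ‖u x‖^2 + ‖fderiv ℝ u x‖^2) (Omega n ε h1 h2 1) ∧
  AttainsBV n ε h1 h2 u φ ψ

/-! ### Cutoff functions -/

/-- The derivative of the smooth step is bounded; it vanishes off `(0, 1)`, where the step is
extremal. -/
lemma exists_step : ∃ (χ : ℝ → ℝ) (M : ℝ), 0 ≤ M ∧ ContDiff ℝ 1 χ ∧ (∀ x, 0 ≤ χ x) ∧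
    (∀ x, χ x ≤ 1) ∧ (∀ x ≤ 0, χ x = 0) ∧ (∀ x, 1 ≤ x → χ x = 1) ∧
    (∀ x ≤ 0, deriv χ x = 0) ∧ (∀ x, 1 ≤ x → deriv χ x = 0) ∧ (∀ x, |deriv χ x| ≤ M) := by
  have hc : ContDiff ℝ 1 Real.smoothTransition := by
    have := @Real.smoothTransition.contDiff 1
    exact_mod_cast this
  have h0 : ∀ x ≤ 0, deriv Real.smoothTransition x = 0 := by
    intro x hx
    apply IsLocalMin.deriv_eq_zero
    refine Filter.Eventually.of_forall fun y => ?_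
    rw [Real.smoothTransition.zero_of_nonpos hx]
    exact Real.smoothTransition.nonneg y
  have h1 : ∀ x, 1 ≤ x → deriv Real.smoothTransition x = 0 := by
    intro x hx
    apply IsLocalMax.deriv_eq_zero
    refine Filter.Eventually.of_forall fun y => ?_
    rw [Real.smoothTransition.one_of_one_le hx]
    exact Real.smoothTransition.le_one y
  have hd : Continuous (deriv Real.smoothTransition) := hc.continuous_deriv le_rfl
  obtain ⟨M, hM⟩ := (isCompact_Icc (a := (0:ℝ)) (b := 1)).exists_bound_of_continuousOn
    hd.continuousOn
  have hM0 : 0 ≤ M := (norm_nonneg _).trans (hM 0 (by simp))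
  refine ⟨Real.smoothTransition, M, hM0, hc, Real.smoothTransition.nonneg,
    Real.smoothTransition.le_one, fun x => Real.smoothTransition.zero_of_nonpos,
    fun x => Real.smoothTransition.one_of_one_le, h0, h1, fun x => ?_⟩
  rcases le_total x 0 with hx | hx
  · simpa [h0 x hx] using hM0
  rcases le_total 1 x with hx' | hx'
  · simpa [h1 x hx'] using hM0
  · exact hM x ⟨hx, hx'⟩

/-- Truncations `g_N` of the identity: `g_N` vanishes for `τ² ≤ 1/N`, is dominated by the identity,
has derivative bounded uniformly in `N`, and converges to the identity in `C¹` away from `0`. At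
`τ = 0` the derivatives are `0`. Explicitly `g_N(τ) = τ χ(Nτ² - 1)` for a smooth step `χ`. -/
lemma exists_trunc : ∃ (g : ℕ → ℝ → ℝ) (M : ℝ), 0 ≤ M ∧ (∀ N, ContDiff ℝ 1 (g N)) ∧
    (∀ (N : ℕ) τ, (N:ℝ) * τ ^ 2 ≤ 1 → g N τ = 0) ∧ (∀ N τ, |g N τ| ≤ |τ|) ∧
    (∀ N τ, |deriv (g N) τ| ≤ M) ∧
    (∀ τ, ∀ᶠ N in Filter.atTop, g N τ = τ) ∧
    (∀ τ, ∀ᶠ N in Filter.atTop, deriv (g N) τ = if τ = 0 then 0 else 1) := by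
  obtain ⟨χ, M, hM, hc, h0, h1, hz, ho, hdz, hdo, hb⟩ := exists_step
  have hder : ∀ (N : ℕ) τ, HasDerivAt (fun τ : ℝ => τ * χ (N * τ ^ 2 - 1))
      (χ (N * τ ^ 2 - 1) + 2 * (N * τ ^ 2) * deriv χ (N * τ ^ 2 - 1)) τ := by
    intro N τ
    have h1 : HasDerivAt (fun τ : ℝ => (N:ℝ) * τ ^ 2 - 1) (N * (2 * τ)) τ := by
      have := (((hasDerivAt_id τ).pow 2).const_mul (N:ℝ)).sub_const 1
      simpa using this
    have h2 := ((hc.differentiable (by norm_num)) (N * τ ^ 2 - 1)).hasDerivAt.comp τ h1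
    have h3 : HasDerivAt (fun τ : ℝ => τ * χ (N * τ ^ 2 - 1)) _ τ := (hasDerivAt_id τ).mul h2
    refine h3.congr_deriv ?_
    simp only [id]
    ring
  have hlarge : ∀ τ : ℝ, τ ≠ 0 → ∀ᶠ N : ℕ in Filter.atTop, 1 ≤ (N:ℝ) * τ ^ 2 - 1 := by
    intro τ hτ
    have hp : 0 < τ ^ 2 := by positivity
    obtain ⟨K, hK⟩ := exists_nat_gt (2 / τ ^ 2)
    filter_upwards [Filter.eventually_ge_atTop K] with N hN
    have : 2 / τ ^ 2 < N := hK.trans_le (by exact_mod_cast hN)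
    rw [div_lt_iff₀ hp] at this
    linarith
  refine ⟨fun N τ => τ * χ (N * τ ^ 2 - 1), 1 + 4 * M, by positivity, ?_, ?_, ?_, ?_, ?_, ?_⟩
  · intro N
    exact contDiff_id.mul (hc.comp (by fun_prop))
  · intro N τ h
    simp only [hz _ (sub_nonpos.2 h), mul_zero]
  · intro N τ
    simp only [abs_mul, abs_of_nonneg (h0 _)]
    exact mul_le_of_le_one_right (abs_nonneg _) (h1 _)
  · intro N τ
    rw [(hder N τ).deriv]
    have hN : 0 ≤ (N:ℝ) * τ ^ 2 := by positivity
    refine (abs_add_le _ _).trans (add_le_add ?_ ?_)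
    · rw [abs_of_nonneg (h0 _)]; exact h1 _
    · rcases le_total 1 ((N:ℝ) * τ ^ 2 - 1) with h | h
      · rw [hdo _ h]; simpa using hM
      · rw [abs_mul, abs_of_nonneg (by positivity)]
        exact mul_le_mul (by linarith) (hb _) (abs_nonneg _) (by norm_num)
  · intro τ
    rcases eq_or_ne τ 0 with rfl | hτ
    · simp
    · filter_upwards [hlarge τ hτ] with N hN
      simp [ho _ hN]
  · intro τ
    rcases eq_or_ne τ 0 with rfl | hτ
    · refine Filter.Eventually.of_forall fun N => ?_
      rw [(hder N 0).deriv]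
      simp [hz]
    · filter_upwards [hlarge τ hτ] with N hN
      rw [(hder N τ).deriv]
      simp [ho _ hN, hdo _ hN, hτ]

/-- Horizontal cutoff `η` between the cylinders of radii `t < s`. The constant `D` bounding
`|∂_v η| (s - t)` is absolute. -/
lemma exists_cutoff : ∃ D : ℝ, 0 ≤ D ∧ ∀ (n : ℕ) (a : Ep n) (t s : ℝ), 0 < t → t < s →
    ∃ η : Efull n → ℝ, ContDiff ℝ 1 η ∧ (∀ x, 0 ≤ η x) ∧ (∀ x, η x ≤ 1) ∧
      (∀ x, ‖x.1 - a‖ ≤ t → η x = 1) ∧ (∀ x, s ≤ ‖x.1 - a‖ → η x = 0) ∧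
      (∀ x v, ‖v‖ ≤ 1 → |fderiv ℝ η x v| ≤ D / (s - t)) := by
  obtain ⟨χ, M, hM, hc, h0, h1, hz, ho, hdz, hdo, hb⟩ := exists_step
  refine ⟨2 * M, by positivity, fun n a t s ht hts => ?_⟩
  have hs : 0 < s := ht.trans hts
  have hd : 0 < s ^ 2 - t ^ 2 := by nlinarith
  set q : Efull n → ℝ := fun x => (s ^ 2 - ‖x.1 - a‖ ^ 2) / (s ^ 2 - t ^ 2) with hq
  have hqc : ContDiff ℝ 1 q := by
    have : ContDiff ℝ 1 (fun x : Efull n => ‖x.1 - a‖ ^ 2) :=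
      (contDiff_fst.sub contDiff_const).norm_sq ℝ
    exact (contDiff_const.sub this).div_const _
  have hqd : ∀ x v, fderiv ℝ q x v = -(2 * inner ℝ (x.1 - a) v.1) / (s ^ 2 - t ^ 2) := by
    intro x v
    have h1 : HasFDerivAt (fun x : Efull n => x.1 - a) (ContinuousLinearMap.fst ℝ _ _) x :=
      hasFDerivAt_fst.sub_const a
    have h2 := (h1.norm_sq.const_sub (s ^ 2)).mul_const (s ^ 2 - t ^ 2)⁻¹
    have h3 : q = fun x => (s ^ 2 - ‖x.1 - a‖ ^ 2) * (s ^ 2 - t ^ 2)⁻¹ := by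
      ext x; simp [hq, div_eq_mul_inv]
    rw [h3, h2.fderiv]
    simp [div_eq_mul_inv, inner_sub_left]
    ring
  have hder : ∀ x v, fderiv ℝ (fun x => χ (q x)) x v = deriv χ (q x) * fderiv ℝ q x v := by
    intro x v
    have h2 := ((hc.differentiable (by norm_num)) (q x)).hasDerivAt.comp_hasFDerivAt x
      ((hqc.differentiable (by norm_num)) x).hasFDerivAt
    have h3 : (fun x => χ (q x)) = χ ∘ q := rfl
    rw [h3, h2.fderiv]
    simp
  have hqneg : ∀ x : Efull n, s ≤ ‖x.1 - a‖ → q x ≤ 0 := by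
    intro x hx
    apply div_nonpos_of_nonpos_of_nonneg _ hd.le
    nlinarith
  refine ⟨fun x => χ (q x), hc.comp hqc, fun x => h0 _, fun x => h1 _, ?_, ?_, ?_⟩
  · intro x hx
    apply ho
    rw [hq, le_div_iff₀ hd]
    nlinarith [norm_nonneg (x.1 - a)]
  · intro x hx
    exact hz _ (hqneg x hx)
  · intro x v hv
    have hst : 0 < s - t := sub_pos.2 hts
    rw [hder]
    rcases le_total s ‖x.1 - a‖ with hx | hx
    · rw [hdz _ (hqneg x hx)]; simp; positivity
    · have hin : |inner ℝ (x.1 - a) v.1| ≤ s := by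
        refine (abs_real_inner_le_norm _ _).trans ?_
        have : ‖v.1‖ ≤ 1 := (norm_fst_le v).trans hv
        calc ‖x.1 - a‖ * ‖v.1‖ ≤ s * 1 := mul_le_mul hx this (norm_nonneg _) hs.le
          _ = s := mul_one s
      rw [hqd, abs_mul, abs_div, abs_neg, abs_mul, abs_of_pos hd]
      calc |deriv χ (q x)| * (|2| * |inner ℝ (x.1 - a) v.1| / (s ^ 2 - t ^ 2))
          ≤ M * (2 * s / (s ^ 2 - t ^ 2)) := by
            rw [abs_two]; gcongr; exact hb _
        _ ≤ M * (2 / (s - t)) := by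
            gcongr M * ?_
            rw [div_le_div_iff₀ hd hst]
            nlinarith
        _ = 2 * M / (s - t) := by ring

/-! ### Coordinate directions -/

lemma norm_dir_le (n : ℕ) (α : Fin n) : ‖dir n α‖ ≤ 1 := by
  unfold dir
  split_ifs <;> simp [Prod.norm_def]

lemma abs_apply_dir_le (n : ℕ) (L : Efull n →L[ℝ] ℝ) (α : Fin n) : |L (dir n α)| ≤ ‖L‖ :=
  L.unit_le_opNorm _ (norm_dir_le n α)

/-- The operator norm (dual to the sup norm on `Ep n × ℝ`) is controlled by the Euclidean length
of the gradient. -/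
lemma norm_sq_le_sum_dir (n : ℕ) (hn : 2 ≤ n) (L : Efull n →L[ℝ] ℝ) :
    ‖L‖ ^ 2 ≤ n * ∑ α : Fin n, (L (dir n α)) ^ 2 := by
  have h1 : ‖L‖ ≤ ∑ α : Fin n, |L (dir n α)| := by
    obtain ⟨m, rfl⟩ : ∃ m, n = m + 1 := ⟨n - 1, by omega⟩
    refine L.opNorm_le_bound (Finset.sum_nonneg fun _ _ => abs_nonneg _) fun v => ?_
    have hv : v = ∑ i : Fin m, v.1 i • dir (m + 1) i.castSucc + v.2 • dir (m + 1) (Fin.last m) := by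
      have ha : ∀ i : Fin m, dir (m + 1) i.castSucc = (EuclideanSpace.single i 1, (0:ℝ)) := by
        intro i; simp [dir]
      have hb : dir (m + 1) (Fin.last m) = (0, 1) := by simp [dir]
      rw [hb]
      simp only [ha]
      ext j
      · simp [Prod.fst_sum, Pi.single_apply]
      · simp [Prod.snd_sum]
    have hL : L v = ∑ i : Fin m, v.1 i * L (dir (m + 1) i.castSucc)
        + v.2 * L (dir (m + 1) (Fin.last m)) := by
      conv_lhs => rw [hv]
      simp
    rw [hL, Fin.sum_univ_castSucc, add_mul, Finset.sum_mul, Real.norm_eq_abs]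
    refine (abs_add_le _ _).trans (add_le_add ((Finset.abs_sum_le_sum_abs _ _).trans
      (Finset.sum_le_sum fun i _ => ?_)) ?_)
    · rw [abs_mul, mul_comm]
      gcongr
      exact (PiLp.norm_apply_le v.1 i).trans (norm_fst_le v)
    · rw [abs_mul, mul_comm]
      gcongr
      exact norm_snd_le v
  calc ‖L‖ ^ 2 ≤ (∑ α : Fin n, |L (dir n α)|) ^ 2 := by gcongr
    _ ≤ n * ∑ α : Fin n, |L (dir n α)| ^ 2 := by
      simpa using sq_sum_le_card_mul_sum_sq (s := (Finset.univ : Finset (Fin n)))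
        (f := fun α => |L (dir n α)|)
    _ = _ := by simp

/-! ### Integration by parts with a compactly supported test function -/

instance isAddHaarMeasure_volume_Efull (n : ℕ) :
    (volume : Measure (Efull n)).IsAddHaarMeasure := by
  rw [Measure.volume_eq_prod]
  infer_instance

/-- `∫_U ∂_v (η² g(w) ∂_v w) = 0` when the field `η² g(w) ∂_v w` is supported in a compact subset
of `U`, expanded by the product rule. -/
lemma integral_div_eq_zero (n : ℕ) (U K : Set (Efull n)) (hU : IsOpen U) (hK : IsCompact K)
    (hKU : K ⊆ U) (w η : Efull n → ℝ) (g : ℝ → ℝ) (hw : ContDiffOn ℝ 2 w U) (hη : ContDiff ℝ 1 η)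
    (hg : ContDiff ℝ 1 g) (hsupp : ∀ x ∈ U, x ∉ K → η x ^ 2 * g (w x) = 0) (v : Efull n) :
    IntegrableOn (fun x => η x ^ 2 * deriv g (w x) * fderiv ℝ w x v ^ 2
      + 2 * η x * g (w x) * (fderiv ℝ η x v * fderiv ℝ w x v)
      + η x ^ 2 * g (w x) * fderiv ℝ (fun y => fderiv ℝ w y v) x v) U ∧
    ∫ x in U, (η x ^ 2 * deriv g (w x) * fderiv ℝ w x v ^ 2
      + 2 * η x * g (w x) * (fderiv ℝ η x v * fderiv ℝ w x v)
      + η x ^ 2 * g (w x) * fderiv ℝ (fun y => fderiv ℝ w y v) x v) = 0 := by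
  classical
  set V : Efull n → ℝ := U.indicator (fun x => η x ^ 2 * g (w x) * fderiv ℝ w x v) with hV
  have hV0 : ∀ x, x ∉ K → V x = 0 := by
    intro x hx
    by_cases hxU : x ∈ U
    · rw [hV, Set.indicator_of_mem hxU, hsupp x hxU hx, zero_mul]
    · rw [hV, Set.indicator_of_notMem hxU]
  have hVnear : ∀ x ∉ U, V =ᶠ[nhds x] fun _ => 0 := by
    intro x hx
    filter_upwards [hK.isClosed.isOpen_compl.mem_nhds (fun h => hx (hKU h))] with y hy
    exact hV0 y hy
  have hVU : ∀ x ∈ U, V =ᶠ[nhds x] fun x => η x ^ 2 * g (w x) * fderiv ℝ w x v := by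
    intro x hx
    filter_upwards [hU.mem_nhds hx] with y hy
    rw [hV, Set.indicator_of_mem hy]
  have hwAt : ∀ x ∈ U, ContDiffAt ℝ 2 w x := fun x hx => hw.contDiffAt (hU.mem_nhds hx)
  have hdw : ∀ x ∈ U, ContDiffAt ℝ 1 (fun y => fderiv ℝ w y v) x := fun x hx =>
    ((hwAt x hx).fderiv_right (by norm_num)).clm_apply contDiffAt_const
  have hVc : ContDiff ℝ 1 V := by
    rw [contDiff_iff_contDiffAt]
    intro x
    by_cases hx : x ∈ U
    · refine ContDiffAt.congr_of_eventuallyEq ?_ (hVU x hx)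
      refine ContDiffAt.mul (ContDiffAt.mul (hη.contDiffAt.pow 2) ?_) (hdw x hx)
      exact hg.contDiffAt.comp x ((hwAt x hx).of_le (by norm_num))
    · exact contDiffAt_const.congr_of_eventuallyEq (hVnear x hx)
  have hVs : HasCompactSupport V := HasCompactSupport.intro hK hV0
  have hVd : Continuous (fun x => fderiv ℝ V x v) :=
    (hVc.continuous_fderiv (by norm_num)).clm_apply continuous_const
  have hVi : Integrable (fun x => fderiv ℝ V x v) :=
    hVd.integrable_of_hasCompactSupport (hVs.fderiv_apply ℝ v)
  have hzero : ∫ x, fderiv ℝ V x v = 0 := by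
    have := integral_mul_fderiv_eq_neg_fderiv_mul_of_integrable
      (μ := (volume : Measure (Efull n))) (f := fun _ => (1:ℝ)) (g := V) (v := v)
      (by simp) (by simpa using hVi)
      (by simpa using hVc.continuous.integrable_of_hasCompactSupport hVs)
      (fun x _ => differentiableAt_const _) (fun x _ => hVc.differentiable (by norm_num) x)
    simpa using this
  have hform : ∀ x ∈ U, fderiv ℝ V x v = η x ^ 2 * deriv g (w x) * fderiv ℝ w x v ^ 2
      + 2 * η x * g (w x) * (fderiv ℝ η x v * fderiv ℝ w x v)
      + η x ^ 2 * g (w x) * fderiv ℝ (fun y => fderiv ℝ w y v) x v := by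
    intro x hx
    rw [(hVU x hx).fderiv_eq]
    have e1 := ((hη.differentiable (by norm_num)) x).hasFDerivAt
    have e2 := ((hg.differentiable (by norm_num)) (w x)).hasDerivAt.comp_hasFDerivAt x
      ((hwAt x hx).differentiableAt (by norm_num)).hasFDerivAt
    have e3 := ((hdw x hx).differentiableAt (by norm_num)).hasFDerivAt
    have e4 := ((e1.pow 2).mul e2).mul e3
    have e5 : fderiv ℝ (fun x => η x ^ 2 * g (w x) * fderiv ℝ w x v) x = _ := e4.fderiv
    rw [e5]
    simp
    ring
  have hout : ∀ x ∉ U, fderiv ℝ V x v = 0 := by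
    intro x hx
    rw [(hVnear x hx).fderiv_eq]; simp
  constructor
  · exact (hVi.integrableOn (s := U)).congr_fun hform hU.measurableSet
  · rw [← setIntegral_congr_fun hU.measurableSet hform,
      setIntegral_eq_integral_of_forall_compl_eq_zero hout, hzero]

/-- The gradient of `w` vanishes almost everywhere on the zero set of `w`: on that set `w` is
approximated by the zero map without error, so its derivative vanishes at density points. -/
lemma fderiv_eq_zero_ae (n : ℕ) (U : Set (Efull n)) (hU : IsOpen U) (w : Efull n → ℝ)
    (hw : ContDiffOn ℝ 2 w U) :
    ∀ᵐ x ∂(volume.restrict U), w x = 0 → fderiv ℝ w x = 0 := by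
  set s : Set (Efull n) := {x ∈ U | w x = 0} with hs
  have hsm : MeasurableSet s := by
    obtain ⟨O, hO, hO'⟩ := continuousOn_iff_isClosed.1 hw.continuousOn {0} isClosed_singleton
    have : s = O ∩ U := by
      rw [← hO']; ext x; simp [hs, and_comm]
    rw [this]
    exact hO.measurableSet.inter hU.measurableSet
  let T : ℝ →L[ℝ] Efull n := ContinuousLinearMap.inr ℝ (Ep n) ℝ
  have hA : ApproximatesLinearOn (fun x => T (w x)) (0 : Efull n →L[ℝ] Efull n) s 0 := by
    intro x hx y hy
    simp [hx.2, hy.2]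
  have := hA.norm_fderiv_sub_le volume hsm (fun x => T.comp (fderiv ℝ w x)) (by
    intro x hx
    exact (T.hasFDerivAt.comp x ((hw.contDiffAt (hU.mem_nhds hx.1)).differentiableAt
      (by norm_num)).hasFDerivAt).hasFDerivWithinAt)
  rw [ae_restrict_iff' hsm] at this
  rw [ae_restrict_iff' hU.measurableSet]
  filter_upwards [this] with x hx hxU hx0
  have h := hx ⟨hxU, hx0⟩
  simp only [sub_zero, nonpos_iff_eq_zero, nnnorm_eq_zero] at h
  ext v
  · have := congrArg (fun L : Efull n →L[ℝ] Efull n => (L (v, 0)).2) h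
    simpa [T] using this
  · have := congrArg (fun L : Efull n →L[ℝ] Efull n => (L (0, 1)).2) h
    simpa [T] using this

/-- Energy identity: testing the equation with `η² w`. The test functions are `η² g_N(w)`, which
are compactly supported in `U`, and `N → ∞` by dominated convergence. The limit of `g_N'(w)` is the
indicator of `{w ≠ 0}`, which is harmless since `∇w = 0` a.e. on `{w = 0}`. -/
lemma energy_identity (n : ℕ) (U : Set (Efull n)) (hU : IsOpen U) (w η : Efull n → ℝ) (B : ℝ)
    (hw : ContDiffOn ℝ 2 w U) (hη : ContDiff ℝ 1 η) (hη0 : ∀ x, 0 ≤ η x) (hη1 : ∀ x, η x ≤ 1)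
    (hB : ∀ x α, |fderiv ℝ η x (dir n α)| ≤ B)
    (hK : ∀ N : ℕ, ∃ K, IsCompact K ∧ K ⊆ U ∧ ∀ x ∈ U, x ∉ K → η x = 0 ∨ (N:ℝ) * w x ^ 2 ≤ 1)
    (hw2 : IntegrableOn (fun x => ‖w x‖ ^ 2) U)
    (hdw2 : IntegrableOn (fun x => ‖fderiv ℝ w x‖ ^ 2) U)
    (hl2 : IntegrableOn (fun x => lapl n w x ^ 2) U) :
    IntegrableOn (fun x => η x ^ 2 * ∑ α, fderiv ℝ w x (dir n α) ^ 2
      + 2 * η x * w x * ∑ α, fderiv ℝ η x (dir n α) * fderiv ℝ w x (dir n α)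
      + η x ^ 2 * w x * lapl n w x) U ∧
    ∫ x in U, (η x ^ 2 * ∑ α, fderiv ℝ w x (dir n α) ^ 2
      + 2 * η x * w x * ∑ α, fderiv ℝ η x (dir n α) * fderiv ℝ w x (dir n α)
      + η x ^ 2 * w x * lapl n w x) = 0 := by
  obtain ⟨g, M, hM, hgc, hg0, hgle, hgd, hglim, hgdlim⟩ := exists_trunc
  set S : Efull n → ℝ := fun x => ∑ α, fderiv ℝ w x (dir n α) ^ 2 with hS
  set P : Efull n → ℝ := fun x => ∑ α, fderiv ℝ η x (dir n α) * fderiv ℝ w x (dir n α) with hP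
  set F : ℕ → Efull n → ℝ := fun N x => η x ^ 2 * deriv (g N) (w x) * S x
      + 2 * η x * g N (w x) * P x + η x ^ 2 * g N (w x) * lapl n w x with hF
  set Q : Efull n → ℝ := fun x => η x ^ 2 * S x + 2 * η x * w x * P x
      + η x ^ 2 * w x * lapl n w x with hQ
  have hFsum : ∀ N, IntegrableOn (F N) U ∧ ∫ x in U, F N x = 0 := by
    intro N
    obtain ⟨K, hKc, hKU, hK0⟩ := hK N
    have h := fun α => integral_div_eq_zero n U K hU hKc hKU w η (g N) hw hη (hgc N)
      (by
        intro x hx hxK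
        rcases hK0 x hx hxK with h | h
        · simp [h]
        · simp [hg0 N _ h]) (dir n α)
    have hFe : F N = fun x => ∑ α, (η x ^ 2 * deriv (g N) (w x) * fderiv ℝ w x (dir n α) ^ 2
      + 2 * η x * g N (w x) * (fderiv ℝ η x (dir n α) * fderiv ℝ w x (dir n α))
      + η x ^ 2 * g N (w x) * fderiv ℝ (fun y => fderiv ℝ w y (dir n α)) x (dir n α)) := by
      ext x
      simp only [hF, hS, hP, lapl, Finset.mul_sum, Finset.sum_add_distrib]
    rw [hFe]
    refine ⟨integrable_finsetSum _ fun α _ => (h α).1, ?_⟩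
    rw [integral_finsetSum _ fun α _ => (h α).1]
    exact Finset.sum_eq_zero fun α _ => (h α).2
  set b : Efull n → ℝ := fun x => ((M + 1) * n + 1) * ‖fderiv ℝ w x‖ ^ 2
    + ((n * B) ^ 2 + 1) * ‖w x‖ ^ 2 + lapl n w x ^ 2 with hb
  have hbi : IntegrableOn b U := ((hdw2.const_mul _).add (hw2.const_mul _)).add hl2
  have hS0 : ∀ x, 0 ≤ S x := fun x => Finset.sum_nonneg fun _ _ => sq_nonneg _
  have hSle : ∀ x, S x ≤ n * ‖fderiv ℝ w x‖ ^ 2 := by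
    intro x
    have : S x ≤ ∑ _α : Fin n, ‖fderiv ℝ w x‖ ^ 2 := by
      refine Finset.sum_le_sum fun α _ => ?_
      rw [← sq_abs]
      gcongr
      exact abs_apply_dir_le n _ α
    simpa using this
  have hPle : ∀ x, |P x| ≤ n * B * ‖fderiv ℝ w x‖ := by
    intro x
    have : |P x| ≤ ∑ _α : Fin n, B * ‖fderiv ℝ w x‖ := by
      refine (Finset.abs_sum_le_sum_abs _ _).trans (Finset.sum_le_sum fun α _ => ?_)
      rw [abs_mul]
      exact mul_le_mul (hB x α) (abs_apply_dir_le n _ α) (abs_nonneg _)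
        ((abs_nonneg _).trans (hB x α))
    simpa [mul_assoc] using this
  -- the common bound: `a` stands for `g_N'(w)` (or `1`) and `c` for `g_N(w)` (or `w`)
  have hbound : ∀ x a c, |a| ≤ M + 1 → |c| ≤ |w x| →
      ‖η x ^ 2 * a * S x + 2 * η x * c * P x + η x ^ 2 * c * lapl n w x‖ ≤ b x := by
    intro x a c ha hc
    have e0 : η x ^ 2 ≤ 1 := pow_le_one₀ (hη0 x) (hη1 x)
    have e1 : |η x ^ 2 * a * S x| ≤ (M + 1) * (n * ‖fderiv ℝ w x‖ ^ 2) := by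
      rw [abs_mul, abs_mul, abs_of_nonneg (sq_nonneg (η x)), abs_of_nonneg (hS0 x)]
      refine mul_le_mul ?_ (hSle x) (hS0 x) (by positivity)
      calc η x ^ 2 * |a| ≤ 1 * (M + 1) := mul_le_mul e0 ha (abs_nonneg _) zero_le_one
        _ = _ := one_mul _
    have e2 : |2 * η x * c * P x| ≤ 2 * (|w x| * (n * B * ‖fderiv ℝ w x‖)) := by
      rw [abs_mul, abs_mul, abs_mul, abs_two, abs_of_nonneg (hη0 x)]
      calc 2 * η x * |c| * |P x| = 2 * (η x * |c| * |P x|) := by ring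
        _ ≤ 2 * (1 * |w x| * (n * B * ‖fderiv ℝ w x‖)) := by
          gcongr
          · exact hη1 x
          · exact hPle x
        _ = _ := by ring
    have e3 : |η x ^ 2 * c * lapl n w x| ≤ |w x| * |lapl n w x| := by
      rw [abs_mul, abs_mul, abs_of_nonneg (sq_nonneg (η x))]
      calc η x ^ 2 * |c| * |lapl n w x| ≤ 1 * |w x| * |lapl n w x| := by gcongr
        _ = _ := by ring
    have e4 : 2 * (|w x| * (n * B * ‖fderiv ℝ w x‖))
        ≤ (n * B) ^ 2 * |w x| ^ 2 + ‖fderiv ℝ w x‖ ^ 2 := by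
      nlinarith [sq_nonneg (n * B * |w x| - ‖fderiv ℝ w x‖)]
    have e5 : |w x| * |lapl n w x| ≤ |w x| ^ 2 + lapl n w x ^ 2 := by
      rw [← sq_abs (lapl n w x)]
      nlinarith [sq_nonneg (|w x| - |lapl n w x|), sq_nonneg (|w x|), sq_nonneg (|lapl n w x|)]
    have e6 := (abs_add_three (η x ^ 2 * a * S x) (2 * η x * c * P x) (η x ^ 2 * c * lapl n w x))
    simp only [hb, Real.norm_eq_abs]
    linarith
  have hFb : ∀ N x, ‖F N x‖ ≤ b x := fun N x =>
    hbound x _ _ ((hgd N _).trans (by linarith)) (hgle N _)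
  have hQb : ∀ x, ‖Q x‖ ≤ b x := by
    intro x
    have := hbound x 1 (w x) (by rw [abs_one]; linarith) le_rfl
    simpa [hQ] using this
  have hlim : ∀ᵐ x ∂(volume.restrict U), Filter.Tendsto (fun N => F N x) Filter.atTop
      (nhds (Q x)) := by
    filter_upwards [fderiv_eq_zero_ae n U hU w hw] with x hx
    refine tendsto_const_nhds.congr' ?_
    filter_upwards [hglim (w x), hgdlim (w x)] with N h1 h2
    simp only [hF, hQ, h1, h2]
    split_ifs with h0
    · have : S x = 0 := by simp [hS, hx h0]
      simp [this]
    · simp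
  refine ⟨?_, ?_⟩
  · refine Integrable.mono' hbi ?_ (Filter.Eventually.of_forall hQb)
    exact aestronglyMeasurable_of_tendsto_ae Filter.atTop
      (fun N => (hFsum N).1.aestronglyMeasurable) hlim
  · have := tendsto_integral_of_dominated_convergence b
      (fun N => (hFsum N).1.aestronglyMeasurable) hbi
      (fun N => Filter.Eventually.of_forall (hFb N)) hlim
    simp only [(hFsum _).2] at this
    exact (tendsto_nhds_unique this tendsto_const_nhds)

/-! ### Geometry of the narrow region -/

lemma isOpen_Omega_one (n : ℕ) (ε : ℝ) (h1 h2 : Ep n → ℝ)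
    (hh1 : ContinuousOn h1 (closedBall 0 1)) (hh2 : ContinuousOn h2 (closedBall 0 1)) :
    IsOpen (Omega n ε h1 h2 1) := by
  have hO : IsOpen {x : Efull n | ‖x.1‖ < 1} := isOpen_lt (by fun_prop) (by fun_prop)
  have hmap : Set.MapsTo (Prod.fst : Efull n → Ep n) {x : Efull n | ‖x.1‖ < 1}
      (closedBall 0 1) := by
    intro x hx
    simpa using le_of_lt hx
  have hc : ContinuousOn (fun x : Efull n => (x.2 - (-ε/2 + h2 x.1), (ε/2 + h1 x.1) - x.2))
      {x : Efull n | ‖x.1‖ < 1} := by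
    have a1 := hh1.comp continuous_fst.continuousOn hmap
    have a2 := hh2.comp continuous_fst.continuousOn hmap
    exact (continuous_snd.continuousOn.sub (continuousOn_const.add a2)).prodMk
      ((continuousOn_const.add a1).sub continuous_snd.continuousOn)
  have := hc.isOpen_inter_preimage hO (isOpen_Ioi.prod isOpen_Ioi :
    IsOpen (Set.Ioi (0:ℝ) ×ˢ Set.Ioi (0:ℝ)))
  convert this using 1
  ext x
  simp only [Omega, Set.mem_ofPred_eq, Set.mem_inter_iff, Set.mem_preimage, Set.mem_prod,
    Set.mem_Ioi, sub_pos]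

/-- The part of the closure of `Ω₁` over the open unit ball lies between the two graphs. -/
lemma mem_closure_Omega (n : ℕ) (ε : ℝ) (h1 h2 : Ep n → ℝ)
    (hh1 : ContinuousOn h1 (closedBall 0 1)) (hh2 : ContinuousOn h2 (closedBall 0 1))
    (x : Efull n) (hx : x ∈ closure (Omega n ε h1 h2 1)) (hx1 : ‖x.1‖ < 1) :
    -ε/2 + h2 x.1 ≤ x.2 ∧ x.2 ≤ ε/2 + h1 x.1 := by
  have hn : closedBall (0 : Ep n) 1 ∈ nhds x.1 :=
    Filter.mem_of_superset (isOpen_ball.mem_nhds (by simpa using hx1)) ball_subset_closedBall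
  have c1 : ContinuousAt (fun y : Efull n => h1 y.1) x :=
    (hh1.continuousAt hn).comp continuousAt_fst
  have c2 : ContinuousAt (fun y : Efull n => h2 y.1) x :=
    (hh2.continuousAt hn).comp continuousAt_fst
  rw [mem_closure_iff_nhdsWithin_neBot] at hx
  constructor
  · refine le_of_tendsto_of_tendsto (b := nhdsWithin x (Omega n ε h1 h2 1))
      ((continuousAt_const.add c2).tendsto.mono_left nhdsWithin_le_nhds)
      (continuousAt_snd.tendsto.mono_left nhdsWithin_le_nhds) ?_
    filter_upwards [self_mem_nhdsWithin] with y hy using hy.2.1.le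
  · refine le_of_tendsto_of_tendsto (b := nhdsWithin x (Omega n ε h1 h2 1))
      (continuousAt_snd.tendsto.mono_left nhdsWithin_le_nhds)
      ((continuousAt_const.add c1).tendsto.mono_left nhdsWithin_le_nhds) ?_
    filter_upwards [self_mem_nhdsWithin] with y hy using hy.2.2.le

lemma isBounded_Omega_one (n : ℕ) (ε : ℝ) (h1 h2 : Ep n → ℝ)
    (hh1 : ContinuousOn h1 (closedBall 0 1)) (hh2 : ContinuousOn h2 (closedBall 0 1)) :
    Bornology.IsBounded (Omega n ε h1 h2 1) := by
  obtain ⟨A, hA⟩ := (isCompact_closedBall (0 : Ep n) 1).exists_bound_of_continuousOn hh1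
  obtain ⟨B, hB⟩ := (isCompact_closedBall (0 : Ep n) 1).exists_bound_of_continuousOn hh2
  refine (isBounded_closedBall (x := (0 : Ep n)) (r := 1)).prod
    (isBounded_Icc (-ε/2 - B) (ε/2 + A)) |>.subset ?_
  intro x hx
  have hb : x.1 ∈ closedBall (0 : Ep n) 1 := by simpa using hx.1.le
  have a := abs_le.1 (hA _ hb)
  have b := abs_le.1 (hB _ hb)
  exact ⟨hb, by linarith [hx.2.1], by linarith [hx.2.2]⟩

/-- Away from the lateral boundary, a function vanishing continuously on the top and bottom
graphs is small outside a compact subset of `Ω₁`. -/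
lemma exists_compact (n : ℕ) (ε : ℝ) (h1 h2 : Ep n → ℝ)
    (hh1 : ContinuousOn h1 (closedBall 0 1)) (hh2 : ContinuousOn h2 (closedBall 0 1))
    (w : Efull n → ℝ) (hw : ContinuousOn w (closure (Omega n ε h1 h2 1)))
    (hw0 : ∀ x ∈ Gammap n ε h1 1 ∪ Gammam n ε h2 1, w x = 0)
    (a : Ep n) (s : ℝ) (has : ‖a‖ + s < 1) (N : ℕ) :
    ∃ K, IsCompact K ∧ K ⊆ Omega n ε h1 h2 1 ∧
      ∀ x ∈ Omega n ε h1 h2 1, x ∉ K → s ≤ ‖x.1 - a‖ ∨ (N:ℝ) * w x ^ 2 ≤ 1 := by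
  set c := closure (Omega n ε h1 h2 1) with hc
  have hcc : IsCompact c := (isBounded_Omega_one n ε h1 h2 hh1 hh2).isCompact_closure
  refine ⟨{x ∈ c | ‖x.1 - a‖ ≤ s ∧ 1 ≤ (N:ℝ) * w x ^ 2}, ?_, ?_, ?_⟩
  · have hcl : IsClosed (c ∩ (fun x : Efull n => (s - ‖x.1 - a‖, (N:ℝ) * w x ^ 2 - 1)) ⁻¹'
        (Set.Ici 0 ×ˢ Set.Ici 0)) := by
      refine ContinuousOn.preimage_isClosed_of_isClosed ?_ isClosed_closure
        (isClosed_Ici.prod isClosed_Ici)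
      exact ContinuousOn.prodMk (by fun_prop) (by fun_prop)
    refine hcc.of_isClosed_subset ?_ fun x hx => hx.1
    convert hcl using 1
    ext x
    simp
    tauto
  · rintro x ⟨hxc, hxs, hxN⟩
    have hx1 : ‖x.1‖ < 1 := by
      have := norm_le_norm_add_norm_sub' x.1 a
      linarith
    have hb := mem_closure_Omega n ε h1 h2 hh1 hh2 x hxc hx1
    have hne : w x ≠ 0 := by
      intro h; rw [h] at hxN; norm_num at hxN
    refine ⟨hx1, lt_of_le_of_ne hb.1 fun h => hne ?_, lt_of_le_of_ne hb.2 fun h => hne ?_⟩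
    · exact hw0 x (Or.inr ⟨hx1.le, h.symm⟩)
    · exact hw0 x (Or.inl ⟨hx1.le, h⟩)
  · intro x hx hxK
    by_contra! hcon
    exact hxK ⟨subset_closure hx, hcon.1.le, hcon.2.le⟩

theorem stmt12 (n : ℕ) (hn : 2 ≤ n) :
    ∃ C : ℝ, 0 < C ∧
      ∀ κ0 κ1 : ℝ, 0 < κ0 → 0 < κ1 →
      ∀ ε ∈ Set.Ioo (0:ℝ) 1, ∀ h1 h2 : Ep n → ℝ,
        HGeom n ε κ0 κ1 h1 h2 →
      ∀ φ ψ : Ep n → ℝ,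
        ContDiffOn ℝ 2 φ (closedBall 0 1) → ContDiffOn ℝ 2 ψ (closedBall 0 1) →
      ∀ w : Efull n → ℝ,
        ContDiffOn ℝ 2 w (Omega n ε h1 h2 1) →
        ContinuousOn w (closure (Omega n ε h1 h2 1)) →
        (∀ x ∈ Gammap n ε h1 1 ∪ Gammam n ε h2 1, w x = 0) →
        (∀ x ∈ Omega n ε h1 h2 1, lapl n w x = - lapl n (util n ε h1 h2 φ ψ) x) →
        IntegrableOn (fun x => ‖w x‖^2) (Omega n ε h1 h2 1) →
        IntegrableOn (fun x => ‖fderiv ℝ w x‖^2) (Omega n ε h1 h2 1) →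
        IntegrableOn (fun x => ‖lapl n (util n ε h1 h2 φ ψ) x‖^2) (Omega n ε h1 h2 1) →
      ∀ x₀ ∈ Omega n ε h1 h2 (1/2), ∀ t s : ℝ, 0 < t → t < s → ‖x₀.1‖ + s < 1/2 →
        (∫ x in OmegaHat n ε h1 h2 x₀ t, ‖fderiv ℝ w x‖^2) ≤
          C / (s - t)^2 * (∫ x in OmegaHat n ε h1 h2 x₀ s, ‖w x‖^2) +
          C * (s - t)^2 * ∫ x in OmegaHat n ε h1 h2 x₀ s, ‖lapl n (util n ε h1 h2 φ ψ) x‖^2 := by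
  obtain ⟨D, hD, hcut⟩ := exists_cutoff
  have hn0 : (0:ℝ) < n := by exact_mod_cast (by omega : 0 < n)
  refine ⟨n * (4 * n * D ^ 2 + 1), by positivity, ?_⟩
  intro κ0 κ1 _ _ ε _ h1 h2 hG φ ψ _ _ w hw hwc hw0 heq hw2 hdw2 hf2 x₀ _ t s ht hts hx0s
  have hh1 := hG.1.continuousOn
  have hh2 := hG.2.1.continuousOn
  set U := Omega n ε h1 h2 1 with hU
  set f : Efull n → ℝ := lapl n (util n ε h1 h2 φ ψ) with hf
  have hUo : IsOpen U := isOpen_Omega_one n ε h1 h2 hh1 hh2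
  set d := s - t with hd
  have hd0 : 0 < d := sub_pos.2 hts
  obtain ⟨η, hηc, hη0, hη1, hηt, hηs, hdη⟩ := hcut n x₀.1 t s ht hts
  -- the condition `|x'| < 1/2` in `Ω̂_r(x₀)` is implied by `|x' - x₀'| < r ≤ s`
  have hhat : ∀ r ≤ s, OmegaHat n ε h1 h2 x₀ r = U ∩ {x | ‖x.1 - x₀.1‖ < r} := by
    intro r hr
    ext x
    simp only [OmegaHat, hU, Omega, Set.mem_ofPred_eq, Set.mem_inter_iff]
    constructor
    · rintro ⟨⟨a, b⟩, c⟩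
      exact ⟨⟨by linarith, b⟩, c⟩
    · rintro ⟨⟨a, b⟩, c⟩
      have := norm_le_norm_add_norm_sub' x.1 x₀.1
      exact ⟨⟨by linarith, b⟩, c⟩
  have hcyl : ∀ r, MeasurableSet {x : Efull n | ‖x.1 - x₀.1‖ < r} := fun r =>
    (isOpen_lt (by fun_prop) (by fun_prop)).measurableSet
  have hlapl : ∀ x ∈ U, f x ^ 2 = lapl n w x ^ 2 := by
    intro x hx
    rw [heq x hx, neg_sq]
  have hf2' : IntegrableOn (fun x => f x ^ 2) U := by simpa using hf2
  have hw2' : IntegrableOn (fun x => w x ^ 2) U := by simpa using hw2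
  obtain ⟨hQi, hQ0⟩ := energy_identity n U hUo w η (D / d) hw hηc hη0 hη1
    (fun x α => hdη x _ (norm_dir_le n α))
    (fun N => by
      obtain ⟨K, hKc, hKU, hK⟩ := exists_compact n ε h1 h2 hh1 hh2 w hwc hw0 x₀.1 s
        (by linarith) N
      exact ⟨K, hKc, hKU, fun x hx hxK => (hK x hx hxK).imp (hηs x) id⟩)
    hw2 hdw2 (hf2'.congr_fun hlapl hUo.measurableSet)
  set S : Efull n → ℝ := fun x => ∑ α, fderiv ℝ w x (dir n α) ^ 2 with hS
  set P : Efull n → ℝ := fun x => ∑ α, fderiv ℝ η x (dir n α) * fderiv ℝ w x (dir n α) with hP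
  set R : Efull n → ℝ := {x : Efull n | ‖x.1 - x₀.1‖ < s}.indicator
    (fun x => (4 * n * D ^ 2 + 1) / d ^ 2 * w x ^ 2 + (4 * n * D ^ 2 + 1) * d ^ 2 * f x ^ 2)
    with hR
  have hS0 : ∀ x, 0 ≤ S x := fun x => Finset.sum_nonneg fun _ _ => sq_nonneg _
  have hRint : IntegrableOn R U :=
    ((hw2'.const_mul _).add (hf2'.const_mul _)).indicator (hcyl s)
  -- Young's inequality absorbs half of `η² |∇w|²` into the left-hand side
  have hyoung : ∀ x ∈ U, {x : Efull n | ‖x.1 - x₀.1‖ < t}.indicator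
      (fun x => ‖fderiv ℝ w x‖ ^ 2) x ≤ n * (R x + 2 * (η x ^ 2 * S x + 2 * η x * w x * P x
        + η x ^ 2 * w x * lapl n w x)) := by
    intro x hx
    by_cases hxs : ‖x.1 - x₀.1‖ < s
    · have hlow : {x : Efull n | ‖x.1 - x₀.1‖ < t}.indicator
          (fun x => ‖fderiv ℝ w x‖ ^ 2) x ≤ n * (η x ^ 2 * S x) := by
        by_cases hxt : ‖x.1 - x₀.1‖ < t
        · rw [Set.indicator_of_mem (by exact hxt), hηt x hxt.le]
          simpa using norm_sq_le_sum_dir n hn (fderiv ℝ w x)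
        · rw [Set.indicator_of_notMem (by exact hxt)]
          have := hS0 x
          positivity
      have hcross : -(4 * (n * (D / d) ^ 2) * w x ^ 2) - η x ^ 2 * S x
          ≤ 4 * η x * w x * P x := by
        have hterm : ∀ α, -(4 * (D / d) ^ 2 * w x ^ 2) - η x ^ 2 * fderiv ℝ w x (dir n α) ^ 2
            ≤ 4 * η x * w x * (fderiv ℝ η x (dir n α) * fderiv ℝ w x (dir n α)) := by
          intro α
          have h1 : fderiv ℝ η x (dir n α) ^ 2 ≤ (D / d) ^ 2 :=
            sq_le_sq' (abs_le.1 (hdη x _ (norm_dir_le n α))).1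
              (abs_le.1 (hdη x _ (norm_dir_le n α))).2
          have h2 := mul_le_mul_of_nonneg_right h1 (sq_nonneg (w x))
          nlinarith [sq_nonneg (2 * fderiv ℝ η x (dir n α) * w x + η x * fderiv ℝ w x (dir n α))]
        have := Finset.sum_le_sum fun α (_ : α ∈ Finset.univ) => hterm α
        rw [Finset.sum_sub_distrib, ← Finset.mul_sum, ← Finset.mul_sum] at this
        simp only [Finset.sum_const, Finset.card_univ, Fintype.card_fin, nsmul_eq_mul] at this
        calc _ = _ := by ring
          _ ≤ _ := this
      have hsrc : -(w x ^ 2 / d ^ 2 + d ^ 2 * f x ^ 2) ≤ 2 * (η x ^ 2 * w x * lapl n w x) := by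
        rw [hlapl x hx]
        have e0 : η x ^ 2 ≤ 1 := pow_le_one₀ (hη0 x) (hη1 x)
        have e1 : 0 ≤ w x ^ 2 / d ^ 2 + d ^ 2 * lapl n w x ^ 2 := by positivity
        have e2 : -(w x ^ 2 / d ^ 2 + d ^ 2 * lapl n w x ^ 2) ≤ 2 * (w x * lapl n w x) := by
          have h := sq_nonneg (w x / d + d * lapl n w x)
          have h' : w x / d * (d * lapl n w x) = w x * lapl n w x := by field_simp
          rw [← div_pow]
          nlinarith
        have e3 := mul_le_mul_of_nonneg_left e2 (sq_nonneg (η x))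
        nlinarith [mul_le_mul_of_nonneg_right e0 e1]
      have hRx : R x = (4 * n * D ^ 2 + 1) / d ^ 2 * w x ^ 2
          + (4 * n * D ^ 2 + 1) * d ^ 2 * f x ^ 2 := by
        rw [hR, Set.indicator_of_mem (by exact hxs)]
      have hRlow : 4 * (n * (D / d) ^ 2) * w x ^ 2 + w x ^ 2 / d ^ 2 + d ^ 2 * f x ^ 2 ≤ R x := by
        have : 4 * (n * (D / d) ^ 2) * w x ^ 2 + w x ^ 2 / d ^ 2
            = (4 * n * D ^ 2 + 1) / d ^ 2 * w x ^ 2 := by field_simp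
        rw [hRx, this]
        have h3 : 0 ≤ 4 * n * D ^ 2 * (d ^ 2 * f x ^ 2) := by positivity
        linarith
      refine hlow.trans (mul_le_mul_of_nonneg_left ?_ hn0.le)
      linarith
    · have hxt : ¬ ‖x.1 - x₀.1‖ < t := fun h => hxs (h.trans hts)
      rw [hR, Set.indicator_of_notMem (by exact hxt), Set.indicator_of_notMem (by exact hxs),
        hηs x (not_lt.1 hxs)]
      simp
  have hint : ∫ x in U, {x : Efull n | ‖x.1 - x₀.1‖ < t}.indicator
      (fun x => ‖fderiv ℝ w x‖ ^ 2) x ≤ n * ∫ x in U, R x := by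
    refine (setIntegral_mono_on (hdw2.indicator (hcyl t))
      ((hRint.add (hQi.const_mul 2)).const_mul _) hUo.measurableSet hyoung).trans_eq ?_
    rw [integral_const_mul]
    congr 1
    simp only [Pi.add_apply]
    rw [integral_add hRint (hQi.const_mul 2), integral_const_mul, hQ0, mul_zero, add_zero]
  have hsub : U ∩ {x : Efull n | ‖x.1 - x₀.1‖ < s} ⊆ U := Set.inter_subset_left
  rw [hhat t hts.le, hhat s le_rfl]
  rw [setIntegral_indicator (hcyl t), hR, setIntegral_indicator (hcyl s),
    integral_add ((hw2'.mono_set hsub).const_mul _) ((hf2'.mono_set hsub).const_mul _),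
    integral_const_mul, integral_const_mul] at hint
  simp only [Real.norm_eq_abs, sq_abs]
  refine hint.trans_eq ?_
  ring
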